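/- arXiv:1403.0057 — 2 statements merged into one kernel-verified Lean document; each statement's English description precedes it below -/
import Mathlib

section
/- Fix a live-edge set L on a finite vertex type V. The reachable-set size is submodular in the seed set: for all S ⊆ T ⊆ V and every v ∈ V, |R(S ∪ {v}, L)| − |R(S, L)| ≥ |R(T ∪ {v}, L)| − |R(T, L)|. -/
open scoped Classical

/-- Weight of a live-edge set `L` under influence probability function `p`:
the product over all ordered pairs `(u,v)` with `u ≠ v` of `p u v` if the
edge is live and `1 - p u v` otherwise. -/
noncomputable def edgeWeight {V : Type*} [Fintype V] [DecidableEq V]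
    (p : V → V → ℝ) (L : Finset (V × V)) : ℝ :=
  ∏ e ∈ (Finset.univ : Finset V).offDiag, (if e ∈ L then p e.1 e.2 else 1 - p e.1 e.2)

/-- The set of vertices reachable from some vertex of `S` via edges of the
live-edge set `L` (reflexive–transitive closure). -/
noncomputable def reachSet {V : Type*} [Fintype V] [DecidableEq V]
    (S : Finset V) (L : Finset (V × V)) : Finset V :=
  Finset.univ.filter (fun x => ∃ s ∈ S, Relation.ReflTransGen (fun a b => (a, b) ∈ L) s x)

/-- Influence spread `σ(S, p)`: the sum over all live-edge sets `L`
(subsets of the off-diagonal pairs) of `w(p,L) * |R(S,L)|`. -/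
noncomputable def infSpread {V : Type*} [Fintype V] [DecidableEq V]
    (S : Finset V) (p : V → V → ℝ) : ℝ :=
  ∑ L ∈ ((Finset.univ : Finset V).offDiag).powerset, edgeWeight p L * (reachSet S L).card

/-- Marginal influence `MI(v | S, p) = σ(S ∪ {v}, p) − σ(S, p)`. -/
noncomputable def marginInf {V : Type*} [Fintype V] [DecidableEq V]
    (v : V) (S : Finset V) (p : V → V → ℝ) : ℝ :=
  infSpread (insert v S) p - infSpread S p

/-- For a fixed live-edge set, the reachable-set size is submodular in the seed set. -/
theorem reachSet_card_submodular {V : Type*} [Fintype V] [DecidableEq V]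
    (L : Finset (V × V)) (hL : ∀ e ∈ L, e.1 ≠ e.2) :
    ∀ S T : Finset V, S ⊆ T → ∀ v : V,
      ((reachSet (insert v T) L).card : ℝ) - ((reachSet T L).card : ℝ) ≤
        ((reachSet (insert v S) L).card : ℝ) - ((reachSet S L).card : ℝ) := by
  intro S T hST v
  have key : ∀ U : Finset V, reachSet (insert v U) L = reachSet {v} L ∪ reachSet U L := by
    intro U
    ext x
    simp [reachSet]
  have hmono : reachSet S L ⊆ reachSet T L := by
    intro x hx
    simp only [reachSet, Finset.mem_filter, Finset.mem_univ, true_and] at hx ⊢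
    obtain ⟨s, hs, h⟩ := hx
    exact ⟨s, hST hs, h⟩
  rw [key S, key T]
  have h1 := Finset.card_union_add_card_inter (reachSet {v} L) (reachSet S L)
  have h2 := Finset.card_union_add_card_inter (reachSet {v} L) (reachSet T L)
  have h3 : (reachSet {v} L ∩ reachSet S L).card ≤ (reachSet {v} L ∩ reachSet T L).card :=
    Finset.card_le_card (Finset.inter_subset_inter_left hmono)
  rw [sub_le_sub_iff]
  norm_cast
  omega
end

section
/- Let p be an influence probability function on a finite vertex type V and let (v_1, …, v_k) be a greedy sequence for p: the v_ℓ are distinct and for every ℓ ≤ k and every u ∉ {v_1,…,v_{ℓ−1}}, MI(u | {v_1,…,v_{ℓ−1}}, p) ≤ MI(v_ℓ | {v_1,…,v_{ℓ−1}}, p). Then the greedy marginal values are nonincreasing: for every ℓ < k, MI(v_{ℓ+1} | {v_1,…,v_ℓ}, p) ≤ MI(v_ℓ | {v_1,…,v_{ℓ−1}}, p). -/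
open scoped Classical

lemma edgeWeight_nonneg' {V : Type*} [Fintype V] [DecidableEq V]
    (p : V → V → ℝ) (hp1 : ∀ u v, 0 ≤ p u v ∧ p u v ≤ 1) (L : Finset (V × V)) :
    0 ≤ edgeWeight p L := by
  unfold edgeWeight
  refine Finset.prod_nonneg fun e _ => ?_
  have := hp1 e.1 e.2
  split_ifs <;> linarith

lemma reachSet_insert_sdiff {V : Type*} [Fintype V] [DecidableEq V]
    (v : V) (S : Finset V) (L : Finset (V × V)) :
    reachSet (insert v S) L = reachSet {v} L ∪ reachSet S L := by
  ext x
  simp [reachSet]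

lemma card_insert_eq {V : Type*} [Fintype V] [DecidableEq V]
    (v : V) (S : Finset V) (L : Finset (V × V)) :
    ((reachSet (insert v S) L).card : ℝ) - (reachSet S L).card =
      (reachSet {v} L \ reachSet S L).card := by
  rw [reachSet_insert_sdiff, ← Finset.card_sdiff_add_card]
  push_cast
  ring

lemma marginInf_antitone {V : Type*} [Fintype V] [DecidableEq V]
    (p : V → V → ℝ) (hp1 : ∀ u v, 0 ≤ p u v ∧ p u v ≤ 1) (v : V)
    {S T : Finset V} (h : S ⊆ T) : marginInf v T p ≤ marginInf v S p := by
  unfold marginInf infSpread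
  rw [← Finset.sum_sub_distrib, ← Finset.sum_sub_distrib]
  refine Finset.sum_le_sum fun L _ => ?_
  rw [← mul_sub, ← mul_sub, card_insert_eq, card_insert_eq]
  refine mul_le_mul_of_nonneg_left ?_ (edgeWeight_nonneg' p hp1 L)
  have hs : reachSet S L ⊆ reachSet T L := by
    intro x
    simp only [reachSet, Finset.mem_filter, Finset.mem_univ, true_and]
    rintro ⟨s, hs, hr⟩
    exact ⟨s, h hs, hr⟩
  exact_mod_cast Finset.card_le_card (Finset.sdiff_subset_sdiff (Finset.Subset.refl _) hs)

/-- The marginal influence values along a greedy sequence are nonincreasing. -/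
theorem greedy_marginals_nonincreasing {V : Type*} [Fintype V] [DecidableEq V] {k : ℕ}
    (p : V → V → ℝ)
    (hp1 : ∀ u v, 0 ≤ p u v ∧ p u v ≤ 1) (hp2 : ∀ v, p v v = 0)
    (v : Fin k → V) (hvinj : Function.Injective v)
    (hgreedy : ∀ ℓ : Fin k, ∀ u : V, u ∉ Finset.image v (Finset.Iio ℓ) →
      marginInf u (Finset.image v (Finset.Iio ℓ)) p ≤
        marginInf (v ℓ) (Finset.image v (Finset.Iio ℓ)) p) :
    ∀ i j : Fin k, (j : ℕ) = (i : ℕ) + 1 →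
      marginInf (v j) (Finset.image v (Finset.Iio j)) p ≤
        marginInf (v i) (Finset.image v (Finset.Iio i)) p := by
  intro i j hij
  have hlt : i < j := by
    rw [Fin.lt_def]
    omega
  refine (marginInf_antitone p hp1 (v j) (S := Finset.image v (Finset.Iio i)) ?_).trans
    (hgreedy i (v j) ?_)
  · exact Finset.image_subset_image (Finset.Iio_subset_Iio hlt.le)
  · intro hm
    obtain ⟨a, ha, hav⟩ := Finset.mem_image.1 hm
    have := hvinj hav
    subst this
    exact absurd (Finset.mem_Iio.1 ha) (not_lt.2 hlt.le)
end
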